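/- arXiv:2302.09410 — 3 statements merged into one kernel-verified Lean document; each statement's English description precedes it below -/
import Mathlib

section
/- Computation of Q**, vanishing Cosserat couple modulus (Lemma 2, case ii): Let μ>0 and μ_c = 0. Then for every z > 0 and every α ∈ [0,2π), the convex envelope of Q satisfies Q**(z,α) = (μ/2)z²; equivalently, the convex envelope of W vanishes identically: W**(z,α) = 0. -/
/-!
With `μ_c = 0` the energy `W(z, α) = (μ/2) (z sin α - 4 sin² (α/2))²` is nonnegative and vanishes on
both boundary lines `α = 0` and `α = 2π` of the strip. Every point `(z, α)` of the strip lies on the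
segment from `(z, 0)` to `(z, 2π)`, so a convex function below `Q` is at most `(μ/2) z²` there, and
one below `W` is at most `0`. Both bounds are attained, by the convex functions `(μ/2) z²` and `0`
themselves. `convEnvOn_strip_eq` carries out this argument for a general minorant `f(z)` touched on
both boundary lines.
-/

open MeasureTheory Filter Set ENNReal

namespace Cosserat

/-- The shear energy density `W(z, α)` of the Cosserat shear problem. -/
noncomputable def Wener (μ μc z a : ℝ) : ℝ :=
  μ / 2 * (z * Real.sin a - 4 * Real.sin (a / 2) ^ 2) ^ 2
    + μc / 2 * (z * Real.cos a - 2 * Real.sin a) ^ 2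

/-- `Q(z, α) = (μ/2) z² + W(z, α)`. -/
noncomputable def Qener (μ μc z a : ℝ) : ℝ := μ / 2 * z ^ 2 + Wener μ μc z a

/-- The convex envelope of a function `h : ℝ × ℝ → ℝ` on a set `S`:
the pointwise supremum of all functions convex on `S` lying below `h` on `S`. -/
noncomputable def convEnvOn (S : Set (ℝ × ℝ)) (h : ℝ → ℝ → ℝ) (z a : ℝ) : ℝ :=
  sSup {y : ℝ | ∃ g : ℝ × ℝ → ℝ, ConvexOn ℝ S g ∧
    (∀ p ∈ S, g p ≤ h p.1 p.2) ∧ y = g (z, a)}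

/-- The convex envelope of `Q` on `ℝ × [0, 2π]`. -/
noncomputable def QccOn (μ μc z a : ℝ) : ℝ :=
  convEnvOn (Set.univ ×ˢ Set.Icc (0:ℝ) (2 * Real.pi)) (Qener μ μc) z a

/-- The convex envelope of `W` on `ℝ × [0, 2π]`. -/
noncomputable def WccOn (μ μc z a : ℝ) : ℝ :=
  convEnvOn (Set.univ ×ˢ Set.Icc (0:ℝ) (2 * Real.pi)) (Wener μ μc) z a

/-- If `h(z, α)` lies above a convex function `f(z)` on the strip and agrees with it on both boundary
lines, then `f` is the convex envelope of `h`. -/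
theorem convEnvOn_strip_eq {f : ℝ → ℝ} {h : ℝ → ℝ → ℝ} (hf : ConvexOn ℝ Set.univ f)
    (hle : ∀ z a, f z ≤ h z a) (h0 : ∀ z, h z 0 = f z) (h1 : ∀ z, h z (2 * Real.pi) = f z)
    {z a : ℝ} (ha : a ∈ Set.Icc (0:ℝ) (2 * Real.pi)) :
    convEnvOn (Set.univ ×ˢ Set.Icc (0:ℝ) (2 * Real.pi)) h z a = f z := by
  have hpi : (0:ℝ) < 2 * Real.pi := Real.two_pi_pos
  apply IsGreatest.csSup_eq
  constructor
  · refine ⟨fun p => f p.1, ⟨convex_univ.prod (convex_Icc _ _), ?_⟩, fun p _ => hle _ _, rfl⟩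
    intro x _ y _ s t hs ht hst
    exact hf.2 (Set.mem_univ x.1) (Set.mem_univ y.1) hs ht hst
  · rintro y ⟨g, hg, hgh, rfl⟩
    have m0 : ((z, 0) : ℝ × ℝ) ∈ Set.univ ×ˢ Set.Icc (0:ℝ) (2 * Real.pi) :=
      ⟨Set.mem_univ _, le_rfl, hpi.le⟩
    have m1 : ((z, 2 * Real.pi) : ℝ × ℝ) ∈ Set.univ ×ˢ Set.Icc (0:ℝ) (2 * Real.pi) :=
      ⟨Set.mem_univ _, hpi.le, le_rfl⟩
    have g0 : g (z, 0) ≤ f z := (hgh _ m0).trans_eq (h0 z)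
    have g1 : g (z, 2 * Real.pi) ≤ f z := (hgh _ m1).trans_eq (h1 z)
    have hseg : ((z, a) : ℝ × ℝ) ∈ segment ℝ (z, 0) (z, 2 * Real.pi) := by
      rw [← Prod.image_mk_segment_right, segment_eq_Icc hpi.le]
      exact ⟨a, ha, rfl⟩
    exact (hg.le_on_segment m0 m1 hseg).trans (max_le g0 g1)

theorem Wener_zero_right (μ z : ℝ) : Wener μ 0 z 0 = 0 := by
  simp [Wener]

theorem Wener_two_pi_right (μ z : ℝ) : Wener μ 0 z (2 * Real.pi) = 0 := by
  simp [Wener]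

theorem Wener_nonneg {μ : ℝ} (hμ : 0 < μ) (z a : ℝ) : 0 ≤ Wener μ 0 z a := by
  unfold Wener
  positivity

/-- **Lemma 2, case (ii) (Computation of `Q**` for vanishing Cosserat couple
modulus).** If `μ_c = 0` then for all `z > 0` and `α ∈ [0, 2π)`,
`Q**(z, α) = (μ/2) z²`; equivalently `W**(z, α) = 0`. -/
theorem Qcc_formula_muc_zero
    (μ : ℝ) (hμ : 0 < μ) :
    ∀ z : ℝ, 0 < z → ∀ a ∈ Set.Ico (0:ℝ) (2 * Real.pi),
      QccOn μ 0 z a = μ / 2 * z ^ 2 ∧ WccOn μ 0 z a = 0 := by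
  intro z _ a ha
  have ha' : a ∈ Set.Icc (0:ℝ) (2 * Real.pi) := Set.Ico_subset_Icc_self ha
  constructor
  · refine convEnvOn_strip_eq (f := fun z => μ / 2 * z ^ 2) ?_ ?_ ?_ ?_ ha'
    · exact (even_two.convexOn_pow).smul (half_pos hμ).le
    · intro z a
      simpa [Qener] using Wener_nonneg hμ z a
    · intro z
      simp [Qener, Wener_zero_right]
    · intro z
      simp [Qener, Wener_two_pi_right]
  · exact convEnvOn_strip_eq (f := fun _ => 0) (convexOn_const 0 convex_univ)
      (Wener_nonneg hμ) (Wener_zero_right μ) (Wener_two_pi_right μ) ha'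

end Cosserat
end

section
/- Explicit surface energy for μ_c = 0 (Section 4.1): Let μ>0, μ_c = 0, and 0 < γ < 2, and set α₁⁺ := arctan(4γ/(4−γ²)). Then the surface energy c₀ := 2∫₀^{α₁⁺} W(γ,x)^{1/2} dx equals c₀ = (2μ)^{1/2}·[γ(1 − cos α₁⁺) + 2 sin α₁⁺ − 2α₁⁺]. In particular, on the interval [0,α₁⁺] the integrand satisfies W(γ,x)^{1/2} = (μ/2)^{1/2}(γ sin x + 2 cos x − 2). -/
/-! By the half-angle formula `4 sin²(x/2) = 2 - 2 cos x`, the density with `μ_c = 0` is the perfect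
square `W(γ,x) = (μ/2) g(x)²` with `g(x) = γ sin x + 2 cos x - 2`, so the only point is the sign
of `g`. Writing `g(x) = 2 sin(x/2) (γ cos(x/2) - 2 sin(x/2))` and `α₁⁺ = 2 arctan(γ/2)` (the
duplication formula for `arctan`, valid since `γ/2 < 1`), for `0 ≤ x ≤ α₁⁺` one has
`tan(x/2) ≤ γ/2`, hence `g(x) ≥ 0`. The integral of `g` is then elementary. -/

open MeasureTheory Filter Set ENNReal

namespace Cosserat

/-- The second well at `μ_c = 0` is `α₁⁺ = 2 arctan(γ/2)`. -/
lemma well_eq_two_mul_arctan {γ : ℝ} (hγ : γ ∈ Set.Ioo (0:ℝ) 2) :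
    Real.arctan (4 * γ / (4 - γ ^ 2)) = 2 * Real.arctan (γ / 2) := by
  obtain ⟨h0, h2⟩ := hγ
  rw [Real.two_mul_arctan (by linarith) (by linarith)]
  have h : 4 - γ ^ 2 ≠ 0 := by nlinarith
  have h' : 1 - (γ / 2) ^ 2 ≠ 0 := by nlinarith
  rw [show 4 * γ / (4 - γ ^ 2) = 2 * (γ / 2) / (1 - (γ / 2) ^ 2) by
    rw [div_eq_div_iff h h']
    ring]

lemma Wener_zero_eq (μ γ x : ℝ) :
    Wener μ 0 γ x = μ / 2 * (γ * Real.sin x + 2 * Real.cos x - 2) ^ 2 := by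
  have h : Real.cos x = 1 - 2 * Real.sin (x / 2) ^ 2 := by
    rw [← Real.cos_two_mul_eq_one_sub, mul_div_cancel₀ x two_ne_zero]
  rw [Wener, h]
  ring

/-- The unsquared density is nonnegative between the two wells. -/
lemma root_nonneg {γ x : ℝ} (hx : x ∈ Set.Icc 0 (2 * Real.arctan (γ / 2))) :
    0 ≤ γ * Real.sin x + 2 * Real.cos x - 2 := by
  obtain ⟨hx0, hx1⟩ := hx
  obtain ⟨y, rfl⟩ : ∃ y, x = 2 * y := ⟨x / 2, by ring⟩
  have hy0 : 0 ≤ y := by linarith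
  have hya : y ≤ Real.arctan (γ / 2) := by linarith
  have hyp : y < Real.pi / 2 := hya.trans_lt (Real.arctan_lt_pi_div_two _)
  have hyn : -(Real.pi / 2) < y := by linarith [Real.pi_pos]
  have hc : 0 < Real.cos y := Real.cos_pos_of_mem_Ioo ⟨hyn, hyp⟩
  have hs : 0 ≤ Real.sin y :=
    Real.sin_nonneg_of_nonneg_of_le_pi hy0 (by linarith [Real.pi_pos])
  have ht : Real.tan y ≤ γ / 2 := by
    rwa [← Real.arctan_le_arctan_iff, Real.arctan_tan hyn hyp]
  rw [Real.tan_eq_sin_div_cos, div_le_iff₀ hc] at ht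
  have hfac : γ * Real.sin (2 * y) + 2 * Real.cos (2 * y) - 2
      = 2 * Real.sin y * (γ * Real.cos y - 2 * Real.sin y) := by
    rw [Real.sin_two_mul, Real.cos_two_mul, Real.cos_sq']
    ring
  rw [hfac]
  exact mul_nonneg (by linarith) (by linarith)

lemma integral_root (γ a : ℝ) :
    ∫ x in (0:ℝ)..a, (γ * Real.sin x + 2 * Real.cos x - 2)
      = γ * (1 - Real.cos a) + 2 * Real.sin a - 2 * a := by
  have hd : ∀ x ∈ Set.uIcc 0 a,
      HasDerivAt (fun x => γ * (1 - Real.cos x) + 2 * Real.sin x - 2 * x)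
        (γ * Real.sin x + 2 * Real.cos x - 2) x := by
    intro x _
    refine HasDerivAt.congr_deriv (((((Real.hasDerivAt_cos x).const_sub 1).const_mul γ).add
      ((Real.hasDerivAt_sin x).const_mul 2)).sub ((hasDerivAt_id x).const_mul 2)) ?_
    ring
  rw [intervalIntegral.integral_eq_sub_of_hasDerivAt hd
    (Continuous.intervalIntegrable (by fun_prop) _ _)]
  simp

/-- **Explicit surface energy for `μ_c = 0` (Section 4.1).**
With `α₁⁺ = arctan(4γ/(4-γ²))`, on `[0, α₁⁺]` one has
`W(γ,x)^{1/2} = (μ/2)^{1/2}(γ sin x + 2 cos x - 2)`, and the surface energy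
`c₀ = 2∫₀^{α₁⁺} W(γ,x)^{1/2} dx` equals
`(2μ)^{1/2}[γ(1 - cos α₁⁺) + 2 sin α₁⁺ - 2α₁⁺]`. -/
theorem surface_energy_muc_zero
    (μ γ : ℝ) (hμ : 0 < μ) (hγ : γ ∈ Set.Ioo (0:ℝ) 2)
    (a1p : ℝ) (ha1p : a1p = Real.arctan (4 * γ / (4 - γ ^ 2))) :
    (∀ x ∈ Set.Icc (0:ℝ) a1p,
      Real.sqrt (Wener μ 0 γ x)
        = Real.sqrt (μ / 2) * (γ * Real.sin x + 2 * Real.cos x - 2)) ∧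
    2 * ∫ x in (0:ℝ)..a1p, Real.sqrt (Wener μ 0 γ x)
      = Real.sqrt (2 * μ)
        * (γ * (1 - Real.cos a1p) + 2 * Real.sin a1p - 2 * a1p) := by
  rw [well_eq_two_mul_arctan hγ] at ha1p
  have ha0 : 0 ≤ a1p := by
    rw [ha1p]
    have := Real.arctan_nonneg.2 (by linarith [hγ.1] : 0 ≤ γ / 2)
    linarith
  have hpt : ∀ x ∈ Set.Icc (0:ℝ) a1p, Real.sqrt (Wener μ 0 γ x)
      = Real.sqrt (μ / 2) * (γ * Real.sin x + 2 * Real.cos x - 2) := by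
    intro x hx
    rw [Wener_zero_eq, Real.sqrt_mul (by positivity), Real.sqrt_sq (root_nonneg (ha1p ▸ hx))]
  refine ⟨hpt, ?_⟩
  have hsqrt : Real.sqrt (2 * μ) = 2 * Real.sqrt (μ / 2) := by
    rw [show 2 * μ = 2 ^ 2 * (μ / 2) by ring, Real.sqrt_mul (by positivity),
      Real.sqrt_sq (by norm_num)]
  rw [intervalIntegral.integral_congr (fun x hx => hpt x (Set.uIcc_of_le ha0 ▸ hx)),
    intervalIntegral.integral_const_mul, integral_root, hsqrt]
  ring

end Cosserat
end

section
/- Direct minimization in the two-well regime (Proposition 3, case iii, key identities): Let μ > μ_c > 0 and z > 0 with (z²+4)(μ−μ_c)² ≥ 4μ², and set f := ((z²+4)(μ−μ_c)² − 4μ²)^{1/2}, α₁⁻ := arctan((μz−f)/(2μ+zf/2)), α₁⁺ := arctan((μz+f)/(2μ−zf/2)), the latter under the assumption 2μ − zf/2 > 0. Then sin(α₁⁻)·z + 2cos(α₁⁻) = 2μ/(μ−μ_c) and cos(α₁⁻)·z − 2sin(α₁⁻) = f/(μ−μ_c), while sin(α₁⁺)·z + 2cos(α₁⁺) = 2μ/(μ−μ_c)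 and cos(α₁⁺)·z − 2sin(α₁⁺) = −f/(μ−μ_c); consequently, for α equal to either α₁⁻ or α₁⁺, (μ/2)z² + W(z,α) = ((μ+μ_c)/2)z² − 2μ_c²/(μ−μ_c). -/
/-!
Both wells are the same statement up to the sign of `f`: for `g = f` or `g = -f` one has
`g² = (z² + 4)(μ - μc)² - 4μ²`, and the angle is `arctan ((μz - g) / (2μ + zg/2))` with positive
denominator. The vector `(2μ + zg/2, μz - g)` has squared length
`(z² + 4)(μ² + g²/4) = ((z² + 4)(μ - μc)/2)²`, so `cos_sin_well` gives the cosine and sine of the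
angle as rational expressions. The linear identities follow at once, and the energy identity comes
from `z sin α - 4 sin² (α/2) = (z sin α + 2 cos α) - 2`.
-/

open MeasureTheory Filter Set ENNReal

namespace Cosserat

/-- If `(D, N)` has length `s` and `D > 0`, its polar angle is `arctan (N / D)`. -/
lemma cos_sin_arctan_div {N D s : ℝ} (hD : 0 < D) (hs : 0 < s) (h : N ^ 2 + D ^ 2 = s ^ 2) :
    Real.cos (Real.arctan (N / D)) = D / s ∧ Real.sin (Real.arctan (N / D)) = N / s := by
  have hsqrt : √(1 + (N / D) ^ 2) = s / D := by
    rw [show 1 + (N / D) ^ 2 = (s / D) ^ 2 by rw [div_pow, div_pow, ← h]; field_simp; ring]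
    exact Real.sqrt_sq (by positivity)
  rw [Real.cos_arctan, Real.sin_arctan, hsqrt]
  constructor <;> field_simp

lemma cos_sin_well {μ μc z g : ℝ} (hμ : μc < μ)
    (hg : g ^ 2 = (z ^ 2 + 4) * (μ - μc) ^ 2 - 4 * μ ^ 2) (hD : 0 < 2 * μ + z * g / 2) :
    Real.cos (Real.arctan ((μ * z - g) / (2 * μ + z * g / 2)))
        = (2 * μ + z * g / 2) / ((z ^ 2 + 4) * (μ - μc) / 2) ∧
    Real.sin (Real.arctan ((μ * z - g) / (2 * μ + z * g / 2)))
        = (μ * z - g) / ((z ^ 2 + 4) * (μ - μc) / 2) := by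
  have hd : 0 < μ - μc := sub_pos.mpr hμ
  refine cos_sin_arctan_div hD (by positivity) ?_
  linear_combination (z ^ 2 + 4) / 4 * hg

/-- The three identities at one well, the sign of `g` selecting which one. -/
lemma well_identities {μ μc z g a : ℝ} (hμ : μc < μ)
    (hg : g ^ 2 = (z ^ 2 + 4) * (μ - μc) ^ 2 - 4 * μ ^ 2) (hD : 0 < 2 * μ + z * g / 2)
    (ha : a = Real.arctan ((μ * z - g) / (2 * μ + z * g / 2))) :
    Real.sin a * z + 2 * Real.cos a = 2 * μ / (μ - μc) ∧
    Real.cos a * z - 2 * Real.sin a = g / (μ - μc) ∧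
    μ / 2 * z ^ 2 + Wener μ μc z a
      = (μ + μc) / 2 * z ^ 2 - 2 * μc ^ 2 / (μ - μc) := by
  have hd : μ - μc ≠ 0 := (sub_pos.mpr hμ).ne'
  have hz : z ^ 2 + 4 ≠ 0 := by positivity
  obtain ⟨hc, hs⟩ := cos_sin_well hμ hg hD
  rw [← ha] at hc hs
  have h1 : Real.sin a * z + 2 * Real.cos a = 2 * μ / (μ - μc) := by
    rw [hc, hs]; field_simp; ring
  have h2 : Real.cos a * z - 2 * Real.sin a = g / (μ - μc) := by
    rw [hc, hs]; field_simp; ring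
  refine ⟨h1, h2, ?_⟩
  have half : Real.sin (a / 2) ^ 2 = (1 - Real.cos a) / 2 := by
    rw [Real.sin_sq_eq_half_sub, mul_div_cancel₀ a two_ne_zero]; ring
  have e1 : z * Real.sin a - 4 * Real.sin (a / 2) ^ 2 = 2 * μ / (μ - μc) - 2 := by
    rw [half]; linear_combination h1
  have e2 : z * Real.cos a - 2 * Real.sin a = g / (μ - μc) := by
    linear_combination h2
  rw [Wener, e1, e2, div_pow, hg]
  field_simp
  ring

/-- **Proposition 3, case (iii) (Direct minimization in the two-well regime:
key identities).** With `f = ((z²+4)(μ-μ_c)² - 4μ²)^{1/2}`,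
`α₁⁻ = arctan((μz-f)/(2μ+zf/2))` and `α₁⁺ = arctan((μz+f)/(2μ-zf/2))`
(assuming `2μ - zf/2 > 0`), one has
`sin(α₁∓)·z + 2cos(α₁∓) = 2μ/(μ-μ_c)` and
`cos(α₁∓)·z - 2sin(α₁∓) = ±f/(μ-μ_c)`, hence
`(μ/2)z² + W(z, α₁∓) = ((μ+μ_c)/2)z² - 2μ_c²/(μ-μ_c)`. -/
theorem direct_minimization_two_well_identities
    (μ μc z : ℝ) (hμc : 0 < μc) (hμ : μc < μ) (hz : 0 < z)
    (hfge : 4 * μ ^ 2 ≤ (z ^ 2 + 4) * (μ - μc) ^ 2)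
    (f am ap : ℝ)
    (hf : f = Real.sqrt ((z ^ 2 + 4) * (μ - μc) ^ 2 - 4 * μ ^ 2))
    (hden : 0 < 2 * μ - z * f / 2)
    (ham : am = Real.arctan ((μ * z - f) / (2 * μ + z * f / 2)))
    (hap : ap = Real.arctan ((μ * z + f) / (2 * μ - z * f / 2))) :
    Real.sin am * z + 2 * Real.cos am = 2 * μ / (μ - μc) ∧
    Real.cos am * z - 2 * Real.sin am = f / (μ - μc) ∧
    Real.sin ap * z + 2 * Real.cos ap = 2 * μ / (μ - μc) ∧
    Real.cos ap * z - 2 * Real.sin ap = -f / (μ - μc) ∧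
    μ / 2 * z ^ 2 + Wener μ μc z am
      = (μ + μc) / 2 * z ^ 2 - 2 * μc ^ 2 / (μ - μc) ∧
    μ / 2 * z ^ 2 + Wener μ μc z ap
      = (μ + μc) / 2 * z ^ 2 - 2 * μc ^ 2 / (μ - μc) := by
  have hg : f ^ 2 = (z ^ 2 + 4) * (μ - μc) ^ 2 - 4 * μ ^ 2 := by
    rw [hf, Real.sq_sqrt (by linarith)]
  have hf0 : 0 ≤ f := hf ▸ Real.sqrt_nonneg _
  have hμ0 : 0 < μ := hμc.trans hμ
  obtain ⟨m1, m2, m3⟩ := well_identities hμ hg (by positivity) ham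
  obtain ⟨p1, p2, p3⟩ := well_identities (g := -f) (a := ap) (z := z) hμ (by rw [neg_sq, hg])
    (by linarith) (by rw [hap]; ring_nf)
  exact ⟨m1, m2, p1, p2, m3, p3⟩

end Cosserat
end
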